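/- Let G be a finitely generated group, let N ⊴ G be a finite normal subgroup, and let ψ be an automorphism of G with ψ(N) = N, inducing the automorphism ψ̄ on H = G/N. Then gr_{ψ,G} ≃ gr_{ψ̄,H}. -/

import Mathlib

/-- Word norm with respect to a finite generating set (inverses of generators allowed). -/
noncomputable def wordNorm {G : Type*} [Group G] (S : Finset G) (g : G) : ℕ :=
  sInf {n | ∃ l : List G, l.length = n ∧ (∀ x ∈ l, x ∈ S ∨ x⁻¹ ∈ S) ∧ l.prod = g}

/-- `x` and `y` are `ψ`-twisted conjugate. -/
def TwistedConj {G : Type*} [Group G] (ψ : G ≃* G) (x y : G) : Prop :=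
  ∃ g : G, g * x * (ψ g)⁻¹ = y

/-- The twisted conjugacy growth function: number of `ψ`-twisted conjugacy classes
with a representative of word norm at most `n`. -/
noncomputable def twistedGrowth {G : Type*} [Group G] (ψ : G ≃* G) (S : Finset G) (n : ℕ) : ℕ :=
  Set.ncard ((fun x => {y | TwistedConj ψ x y}) '' {g : G | wordNorm S g ≤ n})

def GrowthLE (f g : ℕ → ℝ) : Prop :=
  ∃ c : ℕ, 0 < c ∧ ∀ n : ℕ, max 1 (f n) ≤ c * max 1 (g (c * n))

def GrowthEquiv (f g : ℕ → ℝ) : Prop := GrowthLE f g ∧ GrowthLE g f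

section Helpers

lemma Subgroup.exists_list_of_mem_closure_aux {G : Type*} [Group G] (S : Finset G) (g : G)
    (hg : g ∈ Subgroup.closure (S : Set G)) :
    ∃ l : List G, (∀ x ∈ l, x ∈ S ∨ x⁻¹ ∈ S) ∧ l.prod = g := by
  rw [← Subgroup.mem_toSubmonoid, Subgroup.closure_toSubmonoid] at hg
  obtain ⟨l, hl, hp⟩ := Submonoid.exists_list_of_mem_closure hg
  exact ⟨l, fun x hx => by simpa using hl x hx, hp⟩

lemma wordNorm_exists {G : Type*} [Group G] (S : Finset G)
    (hS : Subgroup.closure (S : Set G) = ⊤) (g : G) :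
    ∃ l : List G, l.length = wordNorm S g ∧ (∀ x ∈ l, x ∈ S ∨ x⁻¹ ∈ S) ∧ l.prod = g := by
  have hg : g ∈ Subgroup.closure (S : Set G) := by rw [hS]; trivial
  obtain ⟨l, hl, hp⟩ := Subgroup.exists_list_of_mem_closure_aux S g hg
  exact Nat.sInf_mem (s := {n | ∃ l : List G, l.length = n ∧
    (∀ x ∈ l, x ∈ S ∨ x⁻¹ ∈ S) ∧ l.prod = g}) ⟨l.length, l, rfl, by simpa using hl, hp⟩

lemma wordNorm_le {G : Type*} [Group G] (S : Finset G) (l : List G)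
    (hl : ∀ x ∈ l, x ∈ S ∨ x⁻¹ ∈ S) : wordNorm S l.prod ≤ l.length :=
  Nat.sInf_le ⟨l, rfl, hl, rfl⟩

lemma wordNorm_mul {G : Type*} [Group G] (S : Finset G)
    (hS : Subgroup.closure (S : Set G) = ⊤) (g h : G) :
    wordNorm S (g * h) ≤ wordNorm S g + wordNorm S h := by
  obtain ⟨l, h1, h2, h3⟩ := wordNorm_exists S hS g
  obtain ⟨k, k1, k2, k3⟩ := wordNorm_exists S hS h
  have := wordNorm_le S (l ++ k) (by
    intro x hx
    rcases List.mem_append.1 hx with hx | hx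
    · exact h2 x hx
    · exact k2 x hx)
  rwa [List.prod_append, List.length_append, h1, h3, k1, k3] at this

lemma wordNorm_map_bound {K G : Type*} [Group K] [Group G] (S : Finset G)
    (hS : Subgroup.closure (S : Set G) = ⊤) (T : Finset K) (f : K → G) :
    ∃ C : ℕ, 0 < C ∧ ∀ l : List K, (∀ x ∈ l, x ∈ T ∨ x⁻¹ ∈ T) →
      wordNorm S (l.map f).prod ≤ C * l.length := by
  refine ⟨1 + (∑ t ∈ T, wordNorm S (f t) + ∑ t ∈ T, wordNorm S (f t⁻¹)), by omega, ?_⟩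
  intro l
  induction l with
  | nil =>
    intro _
    have := wordNorm_le S [] (by simp)
    simpa using this
  | cons a l ih =>
    intro h
    have h1 := ih (fun x hx => h x (List.mem_cons_of_mem _ hx))
    have h2 := wordNorm_mul S hS (f a) (l.map f).prod
    have h3 : wordNorm S (f a) ≤
        ∑ t ∈ T, wordNorm S (f t) + ∑ t ∈ T, wordNorm S (f t⁻¹) := by
      rcases h a List.mem_cons_self with ha | ha
      · have := Finset.single_le_sum (f := fun t => wordNorm S (f t))
          (fun _ _ => Nat.zero_le _) ha
        omega
      · have := Finset.single_le_sum (f := fun t => wordNorm S (f t⁻¹))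
          (fun _ _ => Nat.zero_le _) ha
        simp only [inv_inv] at this
        omega
    rw [List.map_cons, List.prod_cons, List.length_cons, Nat.mul_succ]
    omega

lemma ball_finite {G : Type*} [Group G] (S : Finset G)
    (hS : Subgroup.closure (S : Set G) = ⊤) (n : ℕ) :
    {g : G | wordNorm S g ≤ n}.Finite := by
  classical
  let U : Finset G := S ∪ S.image (fun x => x⁻¹)
  have hfin : {l : List U | l.length ≤ n}.Finite := List.finite_length_le U n
  refine (hfin.image (fun l => (l.map Subtype.val).prod)).subset ?_
  intro g hg
  obtain ⟨l, h1, h2, h3⟩ := wordNorm_exists S hS g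
  have hU : ∀ x ∈ l, x ∈ U := by
    intro x hx
    rcases h2 x hx with h | h
    · exact Finset.mem_union_left _ h
    · exact Finset.mem_union_right _ (Finset.mem_image.2 ⟨_, h, inv_inv x⟩)
  lift l to List U using hU
  refine ⟨l, ?_, h3⟩
  have : l.length = wordNorm S g := by simpa using h1
  have hg' : wordNorm S g ≤ n := hg
  simp only [Set.mem_ofPred_eq]
  omega

lemma TwistedConj.class_eq {G : Type*} [Group G] {ψ : G ≃* G} {x y : G}
    (h : TwistedConj ψ x y) : {z | TwistedConj ψ x z} = {z | TwistedConj ψ y z} := by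
  obtain ⟨g, rfl⟩ := h
  ext z
  constructor
  · rintro ⟨k, rfl⟩
    exact ⟨k * g⁻¹, by simp only [map_mul, map_inv]; group⟩
  · rintro ⟨k, rfl⟩
    exact ⟨k * g, by simp only [map_mul]; group⟩

lemma TwistedConj.rfl' {G : Type*} [Group G] (ψ : G ≃* G) (x : G) : TwistedConj ψ x x :=
  ⟨1, by simp⟩

end Helpers

/-- If `N` is a finite normal subgroup preserved by `ψ`, then the twisted conjugacy
growth of `G` agrees with that of `G/N` (up to `≃`). -/
theorem twisted_growth_finite_normal_quotient
    (G : Type*) [Group G] (N : Subgroup G) [N.Normal]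
    (hNfin : (N : Set G).Finite)
    (ψ : G ≃* G) (hψN : Subgroup.map ψ.toMonoidHom N = N)
    (S : Finset G) (hS : Subgroup.closure (S : Set G) = ⊤)
    (T : Finset (G ⧸ N)) (hT : Subgroup.closure (T : Set (G ⧸ N)) = ⊤) :
    GrowthEquiv (fun n => (twistedGrowth ψ S n : ℝ))
      (fun n => (twistedGrowth (QuotientGroup.congr N N ψ hψN) T n : ℝ)) := by
  classical
  set φ := QuotientGroup.congr N N ψ hψN with hφ
  have hφmk : ∀ g : G, φ (g : G ⧸ N) = ((ψ g : G) : G ⧸ N) := fun g => rfl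
  have hpos : 0 < (N : Set G).ncard :=
    (Set.ncard_pos hNfin).2 ⟨1, N.one_mem⟩
  constructor
  · obtain ⟨C, hC, hb⟩ := wordNorm_map_bound T hT S (fun g : G => (g : G ⧸ N))
    refine ⟨C * (N : Set G).ncard, Nat.mul_pos hC hpos, fun n => ?_⟩
    have key : twistedGrowth ψ S n ≤
        (N : Set G).ncard * twistedGrowth φ T (C * (N : Set G).ncard * n) := by
      let r : Set (G ⧸ N) → G := fun b =>
        Classical.epsilon (fun x : G => {y | TwistedConj φ (x : G ⧸ N) y} = b)
      unfold twistedGrowth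
      rw [← Set.ncard_prod]
      have hfin := hNfin.prod ((ball_finite T hT (C * (N : Set G).ncard * n)).image
        (fun x => {y | TwistedConj φ x y}))
      refine le_trans (Set.ncard_le_ncard ?_ (hfin.image
        (fun p : G × Set (G ⧸ N) => {y | TwistedConj ψ (r p.2 * p.1) y})))
        (Set.ncard_image_le hfin)
      rintro _ ⟨x, hx, rfl⟩
      have hx' : wordNorm S x ≤ n := hx
      have hr : {y | TwistedConj φ ((r {y | TwistedConj φ (x : G ⧸ N) y} : G) : G ⧸ N) y}
          = {y | TwistedConj φ (x : G ⧸ N) y} :=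
        Classical.epsilon_spec
          (p := fun z : G => {y | TwistedConj φ (z : G ⧸ N) y} =
            {y | TwistedConj φ (x : G ⧸ N) y}) ⟨x, rfl⟩
      set z := r {y | TwistedConj φ (x : G ⧸ N) y} with hz
      have hzx : TwistedConj φ (x : G ⧸ N) (z : G ⧸ N) := by
        have : (z : G ⧸ N) ∈ {y | TwistedConj φ (z : G ⧸ N) y} := TwistedConj.rfl' _ _
        rw [hr] at this
        exact this
      obtain ⟨g', hg⟩ := hzx
      obtain ⟨g, rfl⟩ := QuotientGroup.mk_surjective g'
      rw [hφmk, ← QuotientGroup.mk_inv, ← QuotientGroup.mk_mul, ← QuotientGroup.mk_mul] at hg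
      have hm : z⁻¹ * (g * x * (ψ g)⁻¹) ∈ N := QuotientGroup.eq.1 hg.symm
      refine ⟨(z⁻¹ * (g * x * (ψ g)⁻¹), {y | TwistedConj φ (x : G ⧸ N) y}),
        ⟨hm, (x : G ⧸ N), ?_, rfl⟩, ?_⟩
      · obtain ⟨l, h1, h2, h3⟩ := wordNorm_exists S hS x
        have h4 := hb l h2
        have h5 : (l.map (fun g : G => (g : G ⧸ N))).prod = (x : G ⧸ N) := by
          rw [← h3]
          exact (map_list_prod (QuotientGroup.mk' N) l).symm
        rw [h5, h1] at h4
        have h6 : C * wordNorm S x ≤ C * (N : Set G).ncard * n :=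
          Nat.mul_le_mul (Nat.le_mul_of_pos_right _ hpos) hx'
        exact le_trans h4 h6
      · have h7 : TwistedConj ψ x (z * (z⁻¹ * (g * x * (ψ g)⁻¹))) := ⟨g, by group⟩
        exact h7.class_eq.symm
    have key' : (twistedGrowth ψ S n : ℝ) ≤
        ((N : Set G).ncard : ℝ) * twistedGrowth φ T (C * (N : Set G).ncard * n) := by
      exact_mod_cast key
    have hN1 : (1 : ℝ) ≤ ((N : Set G).ncard : ℝ) := by exact_mod_cast hpos
    have hC1 : (1 : ℝ) ≤ (C : ℝ) := by exact_mod_cast hC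
    simp only [Nat.cast_mul]
    set B : ℝ := (twistedGrowth φ T (C * (N : Set G).ncard * n) : ℝ)
    have hCN : ((N : Set G).ncard : ℝ) ≤ C * ((N : Set G).ncard : ℝ) :=
      le_mul_of_one_le_left (by positivity) hC1
    have hle : ((N : Set G).ncard : ℝ) * max 1 B ≤ C * ((N : Set G).ncard : ℝ) * max 1 B :=
      mul_le_mul_of_nonneg_right hCN (by positivity)
    refine le_trans (max_le ?_ ?_) hle
    · exact one_le_mul_of_one_le_of_one_le hN1 (le_max_left _ _)
    · exact le_trans key' (mul_le_mul_of_nonneg_left (le_max_right _ _) (by positivity))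
  · obtain ⟨C, hC, hb⟩ := wordNorm_map_bound S hS T (fun h : G ⧸ N => h.out)
    refine ⟨C, hC, fun n => ?_⟩
    have key : twistedGrowth φ T n ≤ twistedGrowth ψ S (C * n) := by
      unfold twistedGrowth
      have hfin := (ball_finite S hS (C * n)).image (fun x => {y | TwistedConj ψ x y})
      refine le_trans (Set.ncard_le_ncard ?_ (hfin.image
        (fun A : Set G => {z : G ⧸ N | ∃ a ∈ A, TwistedConj φ (a : G ⧸ N) z})))
        (Set.ncard_image_le hfin)
      rintro _ ⟨h, hh, rfl⟩
      have hh' : wordNorm T h ≤ n := hh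
      obtain ⟨l, h1, h2, h3⟩ := wordNorm_exists T hT h
      have h4 := hb l h2
      have h5 : (((l.map (fun h : G ⧸ N => h.out)).prod : G) : G ⧸ N) = h := by
        rw [← h3]
        refine (map_list_prod (QuotientGroup.mk' N) _).trans ?_
        rw [List.map_map]
        congr 1
        conv_rhs => rw [← List.map_id l]
        refine List.map_congr_left fun a _ => ?_
        exact Quotient.out_eq' a
      set x := (l.map (fun h : G ⧸ N => h.out)).prod with hx
      refine ⟨{y | TwistedConj ψ x y}, ⟨x, ?_, rfl⟩, ?_⟩
      · rw [h1] at h4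
        exact le_trans h4 (Nat.mul_le_mul_left _ hh')
      · ext z
        constructor
        · rintro ⟨a, ⟨g, rfl⟩, hz⟩
          have h6 : TwistedConj φ h ((g * x * (ψ g)⁻¹ : G) : G ⧸ N) := by
            refine ⟨(g : G ⧸ N), ?_⟩
            rw [hφmk, ← h5]
            rfl
          change z ∈ {y | TwistedConj φ h y}
          rw [h6.class_eq]
          exact hz
        · intro hz
          exact ⟨x, TwistedConj.rfl' _ _, by rw [h5]; exact hz⟩
    have key' : (twistedGrowth φ T n : ℝ) ≤ twistedGrowth ψ S (C * n) := by
      exact_mod_cast key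
    have hC1 : (1 : ℝ) ≤ (C : ℝ) := by exact_mod_cast hC
    exact le_trans (max_le_max le_rfl key') (le_mul_of_one_le_left (by positivity) hC1)
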